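/- Let n be odd and squarefree with every prime divisor of n at least 7 and Ω(n) ∉ {2, 3}, let p' be a prime divisor of n, and let A = L(n;p'). Then a sequence S in Z_n is an A-extremal sequence for the Davenport constant if and only if S is a U(n)-extremal sequence for the Davenport constant. -/

import Mathlib

open scoped BigOperators

/-- `S` is an `A`-weighted zero-sum sequence in `ZMod n`. -/
def IsWZS {n : ℕ} (A : Set (ZMod n)) {l : ℕ} (S : Fin l → ZMod n) : Prop :=
  ∃ a : Fin l → ZMod n, (∀ i, a i ∈ A) ∧ ∑ i, a i * S i = 0

/-- `S` has a nonempty subsequence which is an `A`-weighted zero-sum sequence. -/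
def HasWZSSub {n : ℕ} (A : Set (ZMod n)) {l : ℕ} (S : Fin l → ZMod n) : Prop :=
  ∃ I : Finset (Fin l), I.Nonempty ∧ ∃ a : Fin l → ZMod n,
    (∀ i ∈ I, a i ∈ A) ∧ ∑ i ∈ I, a i * S i = 0

/-- The `A`-weighted Davenport constant of `ZMod n`: the least positive integer `k`
such that every sequence of `k` elements of `ZMod n` has a nonempty subsequence
which is an `A`-weighted zero-sum sequence. -/
noncomputable def DavW (n : ℕ) (A : Set (ZMod n)) : ℕ :=
  sInf {k | 0 < k ∧ ∀ S : Fin k → ZMod n, HasWZSSub A S}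

/-- An `A`-extremal sequence for the Davenport constant: a sequence of length
`D_A(n) - 1` with no nonempty `A`-weighted zero-sum subsequence. -/
def IsExtremal (n : ℕ) (A : Set (ZMod n)) {l : ℕ} (S : Fin l → ZMod n) : Prop :=
  l = DavW n A - 1 ∧ ¬ HasWZSSub A S

/-- The set of units of `ZMod n`, as a weight set. -/
def USet (n : ℕ) : Set (ZMod n) := {a | IsUnit a}

/-- `S(n)`: the units `a` of `ZMod n` with Jacobi symbol `(a/n) = 1`. -/
def JSet (n : ℕ) : Set (ZMod n) := {a | IsUnit a ∧ jacobiSym (a.val : ℤ) n = 1}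

/-- `L(n;p)`: the units `a` of `ZMod n` with `(a/n) = (a/p)`. -/
def LSet (n p : ℕ) : Set (ZMod n) :=
  {a | IsUnit a ∧ jacobiSym (a.val : ℤ) n = jacobiSym (a.val : ℤ) p}

/-- Two sequences are equivalent with respect to the weight set `A`. -/
def EquivWrt {n : ℕ} (A : Set (ZMod n)) {k : ℕ} (x y : Fin k → ZMod n) : Prop :=
  ∃ (a : Fin k → ZMod n) (c : (ZMod n)ˣ) (σ : Equiv.Perm (Fin k)),
    (∀ i, a i ∈ A) ∧ ∀ i, y (σ i) = (c : ZMod n) * (a i * x i)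

section locallemmas
open Finset

lemma card_T (q : ℕ) [Fact q.Prime] (hq : 7 ≤ q) (s : ℤ) (hs : s = 1 ∨ s = -1) :
    2 * (univ.filter fun a : ZMod q => quadraticChar (ZMod q) a = s).card + 1 = q := by
  have h2 : ringChar (ZMod q) ≠ 2 := by rw [ZMod.ringChar_zmod_n]; omega
  have h0 := quadraticChar_sum_zero h2
  have e1 : ∀ a : ZMod q, quadraticChar (ZMod q) a =
      (if quadraticChar (ZMod q) a = 1 then 1 else 0) -
      (if quadraticChar (ZMod q) a = -1 then 1 else 0) := by
    intro a
    by_cases ha : a = 0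
    · simp [ha]
    · rcases quadraticChar_dichotomy ha with h | h <;> simp [h]
  rw [Finset.sum_congr rfl (fun a _ => e1 a), Finset.sum_sub_distrib, Finset.sum_boole,
    Finset.sum_boole] at h0
  have e2 : ∀ a : ZMod q, (1 : ℕ) =
      (if quadraticChar (ZMod q) a = 1 then 1 else 0) +
      (if quadraticChar (ZMod q) a = -1 then 1 else 0) + (if a = 0 then 1 else 0) := by
    intro a
    by_cases ha : a = 0
    · simp [ha]
    · rcases quadraticChar_dichotomy ha with h | h <;> simp [h, ha]
  have e3 : ∑ a : ZMod q, (1 : ℕ) = q := by simp [ZMod.card]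
  rw [Finset.sum_congr rfl (fun a _ => e2 a), Finset.sum_add_distrib, Finset.sum_add_distrib,
    Finset.sum_boole, Finset.sum_boole, Finset.sum_ite_eq'] at e3
  simp [-quadraticChar_apply] at e3 h0
  rcases hs with rfl | rfl <;> omega

lemma three_cover (q : ℕ) [Fact q.Prime] (hq : 7 ≤ q) (y : Fin 3 → ZMod q) (hy : ∀ i, y i ≠ 0)
    (s : Fin 3 → ℤ) (hs : ∀ i, s i = 1 ∨ s i = -1) (R : ZMod q) :
    ∃ u v w : ZMod q, quadraticChar (ZMod q) u = s 0 ∧ quadraticChar (ZMod q) v = s 1 ∧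
      quadraticChar (ZMod q) w = s 2 ∧ u * y 0 + v * y 1 + w * y 2 = R := by
  classical
  let T : Fin 3 → Finset (ZMod q) := fun i =>
    (univ.filter fun a : ZMod q => quadraticChar (ZMod q) a = s i).image (fun a => a * y i)
  have hT : ∀ i, 2 * (T i).card + 1 = q := by
    intro i
    have h := card_T q hq (s i) (hs i)
    rwa [← Finset.card_image_of_injective _ (mul_left_injective₀ (hy i))] at h
  have hne : ∀ i, (T i).Nonempty := by
    intro i
    rw [← Finset.card_pos]
    have := hT i
    omega
  open scoped Pointwise in
  have c1 := ZMod.cauchy_davenport (Fact.out : q.Prime) (hne 0) (hne 1)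
  open scoped Pointwise in
  have c2 := ZMod.cauchy_davenport (Fact.out : q.Prime) ((hne 0).add (hne 1)) (hne 2)
  open scoped Pointwise in
  have c3 : q ≤ (T 0 + T 1 + T 2).card := by
    have := hT 0
    have := hT 1
    have := hT 2
    simp only [min_le_iff] at c1 c2
    omega
  open scoped Pointwise in
  have c4 : T 0 + T 1 + T 2 = univ := by
    rw [← Finset.card_eq_iff_eq_univ, ZMod.card]
    exact le_antisymm ((Finset.card_le_univ _).trans (ZMod.card q).le) c3
  have c5 := Finset.mem_univ R
  rw [← c4, Finset.mem_add] at c5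
  obtain ⟨b, hb, c, hc, h⟩ := c5
  rw [Finset.mem_add] at hb
  obtain ⟨d, hd, e, he, rfl⟩ := hb
  simp only [T, mem_image, mem_filter, mem_univ, true_and] at hd he hc
  obtain ⟨u, hu, rfl⟩ := hd
  obtain ⟨v, hv, rfl⟩ := he
  obtain ⟨w, hw, rfl⟩ := hc
  exact ⟨u, v, w, hu, hv, hw, h⟩

lemma exists_char (q : ℕ) [Fact q.Prime] (hq : 7 ≤ q) (s : ℤ) (hs : s = 1 ∨ s = -1) :
    ∃ a : ZMod q, quadraticChar (ZMod q) a = s := by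
  have := card_T q hq s hs
  have h : 0 < (univ.filter fun a : ZMod q => quadraticChar (ZMod q) a = s).card := by omega
  obtain ⟨a, ha⟩ := Finset.card_pos.1 h
  exact ⟨a, by simpa using ha⟩

lemma loc3 {ι : Type*} [DecidableEq ι] (q : ℕ) [Fact q.Prime] (hq : 7 ≤ q) (J : Finset ι)
    (y : ι → ZMod q) (hy : ∀ i ∈ J, y i ≠ 0) (hJ : 2 < J.card)
    (s : ι → ℤ) (hs : ∀ i, s i = 1 ∨ s i = -1) :
    ∃ a : ι → ZMod q, (∀ i, quadraticChar (ZMod q) (a i) = s i) ∧ ∑ i ∈ J, a i * y i = 0 := by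
  choose a0 ha0 using fun i => exists_char q hq (s i) (hs i)
  obtain ⟨i, hi, j, hj, k, hk, hij, hik, hjk⟩ := Finset.two_lt_card.1 hJ
  obtain ⟨u, v, w, hu, hv, hw, h⟩ := three_cover q hq ![y i, y j, y k]
    (by intro t; fin_cases t; exacts [hy i hi, hy j hj, hy k hk]) ![s i, s j, s k]
    (by intro t; fin_cases t; exacts [hs i, hs j, hs k])
    (- ∑ t ∈ ((J.erase i).erase j).erase k, a0 t * y t)
  simp [-quadraticChar_apply] at hu hv hw h
  refine ⟨fun t => if t = i then u else if t = j then v else if t = k then w else a0 t, ?_, ?_⟩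
  · intro t
    dsimp only
    split_ifs with h1 h2 h3
    · rw [h1, hu]
    · rw [h2, hv]
    · rw [h3, hw]
    · exact ha0 t
  · rw [← Finset.add_sum_erase J _ hi, ← Finset.add_sum_erase (J.erase i) _ (a := j)
      (by simp [hj, hij.symm]), ← Finset.add_sum_erase ((J.erase i).erase j) _ (a := k)
      (by simp [hk, hik.symm, hjk.symm])]
    have : ∑ x ∈ ((J.erase i).erase j).erase k,
        (if x = i then u else if x = j then v else if x = k then w else a0 x) * y x =
        ∑ t ∈ ((J.erase i).erase j).erase k, a0 t * y t := by
      apply Finset.sum_congr rfl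
      intro t ht
      simp only [mem_erase] at ht
      simp [ht.1, ht.2.1, ht.2.2.1]
    rw [this]
    simp only [hij.symm, hik.symm, hjk.symm, if_true, if_false]
    linear_combination h

lemma loc2 {ι : Type*} [DecidableEq ι] (q : ℕ) [Fact q.Prime] (hq : 7 ≤ q) (J : Finset ι)
    (y : ι → ZMod q) (hy : ∀ i ∈ J, y i ≠ 0) (hJ : 1 < J.card) (i : ι) (hi : i ∈ J)
    (s : ι → ℤ) (hs : ∀ i, s i = 1 ∨ s i = -1) :
    ∃ a : ι → ZMod q, (∀ t, a t ≠ 0) ∧ (∀ t, t ≠ i → quadraticChar (ZMod q) (a t) = s t) ∧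
      ∑ i ∈ J, a i * y i = 0 := by
  choose a0 ha0 using fun i => exists_char q hq (s i) (hs i)
  have hne : ∀ c : ZMod q, ∀ t, quadraticChar (ZMod q) c = s t → c ≠ 0 := by
    intro c t hc h0
    have := hs t
    simp [h0] at hc
    omega
  obtain ⟨j, hj, hji⟩ := Finset.exists_mem_ne hJ i
  set R := ∑ t ∈ (J.erase i).erase j, a0 t * y t with hR
  obtain ⟨v, hv, hvR⟩ : ∃ v : ZMod q, quadraticChar (ZMod q) v = s j ∧ v * y j + R ≠ 0 := by
    have h1 := card_T q hq (s j) (hs j)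
    have h2 : 1 < (univ.filter fun a : ZMod q => quadraticChar (ZMod q) a = s j).card := by omega
    obtain ⟨v, hv, hvn⟩ := Finset.exists_mem_ne h2 (- R / y j)
    refine ⟨v, by simpa using hv, fun h => hvn ?_⟩
    rw [eq_div_iff (hy j hj)]
    linear_combination h
  set u := - (v * y j + R) / y i with hu
  have hu' : u * y i = - (v * y j + R) := by rw [hu, div_mul_cancel₀ _ (hy i hi)]
  have hu0 : u ≠ 0 := by
    rw [hu]; exact div_ne_zero (neg_ne_zero.2 hvR) (hy i hi)
  refine ⟨fun t => if t = i then u else if t = j then v else a0 t, ?_, ?_, ?_⟩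
  · intro t
    dsimp only
    split_ifs with h1 h2
    · exact hu0
    · exact hne v j hv
    · exact hne _ t (ha0 t)
  · intro t ht
    dsimp only
    rw [if_neg ht]
    split_ifs with h2
    · rw [h2, hv]
    · exact ha0 t
  · rw [← Finset.add_sum_erase J _ hi, ← Finset.add_sum_erase (J.erase i) _ (a := j)
      (by simp [hj, hji])]
    have : ∑ x ∈ (J.erase i).erase j,
        (if x = i then u else if x = j then v else a0 x) * y x = R := by
      apply Finset.sum_congr rfl
      intro t ht
      simp only [mem_erase] at ht
      simp [ht.1, ht.2.1]
    rw [this]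
    simp only [hji, if_true, if_false]
    linear_combination hu'

lemma jac_val (q : ℕ) [Fact q.Prime] (a : ZMod q) :
    jacobiSym (a.val : ℤ) q = quadraticChar (ZMod q) a := by
  rw [← jacobiSym.legendreSym.to_jacobiSym, legendreSym]
  simp

lemma sum_dvd {ι : Type*} [DecidableEq ι] (q : ℕ) [Fact q.Prime] (I : Finset ι) (y : ι → ℕ)
    (a : ι → ZMod q)
    (h : ∑ i ∈ I.filter (fun i => ¬ q ∣ y i), a i * (y i : ZMod q) = 0) :
    q ∣ ∑ i ∈ I, (a i).val * y i := by
  rw [← ZMod.natCast_eq_zero_iff]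
  push_cast
  rw [← h, Finset.sum_filter]
  apply Finset.sum_congr rfl
  intro i _
  split_ifs with h1
  · rw [(ZMod.natCast_eq_zero_iff _ _).2 h1]; simp
  · simp

lemma nloc3 {ι : Type*} [DecidableEq ι] (q : ℕ) (hqp : q.Prime) (hq : 7 ≤ q) (I : Finset ι)
    (y : ι → ℕ) (h1 : (I.filter (fun i => ¬ q ∣ y i)).card ≠ 1)
    (h2 : (I.filter (fun i => ¬ q ∣ y i)).card ≠ 2)
    (s : ι → ℤ) (hs : ∀ i, s i = 1 ∨ s i = -1) :
    ∃ a : ι → ℕ, (∀ i, jacobiSym (a i) q = s i) ∧ q ∣ ∑ i ∈ I, a i * y i := by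
  have : Fact q.Prime := ⟨hqp⟩
  by_cases h0 : (I.filter (fun i => ¬ q ∣ y i)).card = 0
  · choose a ha using fun i => exists_char q hq (s i) (hs i)
    refine ⟨fun i => (a i).val, fun i => by rw [jac_val, ha], sum_dvd q I y a ?_⟩
    rw [Finset.card_eq_zero] at h0
    rw [h0]; simp
  · obtain ⟨a, ha, hsum⟩ := loc3 q hq (I.filter (fun i => ¬ q ∣ y i)) (fun i => (y i : ZMod q))
      (by intro i hi; simpa [ZMod.natCast_eq_zero_iff] using (Finset.mem_filter.1 hi).2)
      (by omega) s hs
    exact ⟨fun i => (a i).val, fun i => by rw [jac_val, ha], sum_dvd q I y a hsum⟩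

lemma nloc2 {ι : Type*} [DecidableEq ι] (q : ℕ) (hqp : q.Prime) (hq : 7 ≤ q) (I : Finset ι)
    (y : ι → ℕ) (h1 : (I.filter (fun i => ¬ q ∣ y i)).card ≠ 1)
    (i : ι) (hi : i ∈ I) (hqi : ¬ q ∣ y i)
    (s : ι → ℤ) (hs : ∀ i, s i = 1 ∨ s i = -1) :
    ∃ a : ι → ℕ, (∀ i, jacobiSym (a i) q = 1 ∨ jacobiSym (a i) q = -1) ∧
      (∀ t, t ≠ i → jacobiSym (a t) q = s t) ∧ q ∣ ∑ i ∈ I, a i * y i := by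
  have : Fact q.Prime := ⟨hqp⟩
  have hm : i ∈ I.filter (fun i => ¬ q ∣ y i) := by simp [hi, hqi]
  have hpos := Finset.card_pos.2 ⟨i, hm⟩
  obtain ⟨a, ha0, ha, hsum⟩ := loc2 q hq (I.filter (fun i => ¬ q ∣ y i))
    (fun i => (y i : ZMod q))
    (by intro i hi; simpa [ZMod.natCast_eq_zero_iff] using (Finset.mem_filter.1 hi).2)
    (by omega) i hm s hs
  refine ⟨fun i => (a i).val, fun i => ?_, fun t ht => by rw [jac_val, ha t ht],
    sum_dvd q I y a hsum⟩
  rw [jac_val]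
  exact quadraticChar_dichotomy (ha0 i)

lemma nloc {ι : Type*} [DecidableEq ι] (q : ℕ) (hqp : q.Prime) (hq : 7 ≤ q) (I : Finset ι)
    (y : ι → ℕ) (h1 : (I.filter (fun i => ¬ q ∣ y i)).card ≠ 1) :
    ∃ a : ι → ℕ, (∀ i, jacobiSym (a i) q = 1 ∨ jacobiSym (a i) q = -1) ∧
      q ∣ ∑ i ∈ I, a i * y i := by
  by_cases h0 : (I.filter (fun i => ¬ q ∣ y i)).card = 0
  · obtain ⟨a, ha, hs⟩ := nloc3 q hqp hq I y h1 (by omega) (fun _ => 1) (fun _ => Or.inl rfl)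
    exact ⟨a, fun i => Or.inl (ha i), hs⟩
  · obtain ⟨i, hi⟩ := Finset.card_pos.1 (Nat.pos_of_ne_zero h0)
    rw [Finset.mem_filter] at hi
    obtain ⟨a, ha, -, hs⟩ := nloc2 q hqp hq I y h1 i hi.1 hi.2 (fun _ => 1) (fun _ => Or.inl rfl)
    exact ⟨a, ha, hs⟩

end locallemmas

section global_lemmas
open Finset

lemma jac_prod (a : ℤ) (P : Finset ℕ) (hP : ∀ q ∈ P, q.Prime) :
    jacobiSym a (∏ q ∈ P, q) = ∏ q ∈ P, jacobiSym a q := by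
  induction P using Finset.induction_on with
  | empty => simp
  | insert q P hq ih =>
    have h1 : NeZero q := ⟨(hP q (by simp)).ne_zero⟩
    have h2 : NeZero (∏ q ∈ P, q) :=
      ⟨Finset.prod_ne_zero_iff.2 fun r hr => (hP r (by simp [hr])).ne_zero⟩
    rw [Finset.prod_insert hq, Finset.prod_insert hq, jacobiSym.mul_right,
      ih fun r hr => hP r (by simp [hr])]

lemma jac_ne_dvd (q : ℕ) (hq : q.Prime) (a : ℕ)
    (h : jacobiSym (a : ℤ) q = 1 ∨ jacobiSym (a : ℤ) q = -1) : ¬ q ∣ a := by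
  intro hd
  have : jacobiSym (a : ℤ) q = 0 := by
    rw [jacobiSym.eq_zero_iff]
    refine ⟨hq.ne_zero, ?_⟩
    rw [Int.gcd_natCast_natCast, Nat.gcd_eq_right hd]
    exact hq.one_lt.ne'
  omega

lemma jac_modEq (q a b : ℕ) (h : a ≡ b [MOD q]) :
    jacobiSym (a : ℤ) q = jacobiSym (b : ℤ) q := by
  rw [jacobiSym.mod_left (a : ℤ), jacobiSym.mod_left (b : ℤ)]
  have := (Int.natCast_modEq_iff (n := q)).2 h
  rw [this]

lemma sqfree_dvd (n : ℕ) (hsf : Squarefree n) (k : ℕ) (h : ∀ q ∈ n.primeFactors, q ∣ k) :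
    n ∣ k := by
  rw [← Nat.prod_primeFactors_of_squarefree hsf]
  exact Finset.prod_primes_dvd k
    (fun q hq => (Nat.prime_of_mem_primeFactors hq).prime) h

lemma glue (n p' : ℕ) (hsf : Squarefree n) (hp' : p' ∈ n.primeFactors) {l : ℕ}
    (S : Fin l → ZMod n) (I : Finset (Fin l)) (hI : I.Nonempty) (a : ℕ → Fin l → ℕ)
    (ha : ∀ q ∈ n.primeFactors, ∀ i, jacobiSym (a q i) q = 1 ∨ jacobiSym (a q i) q = -1)
    (hsum : ∀ q ∈ n.primeFactors, q ∣ ∑ i ∈ I, a q i * (S i).val)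
    (hprod : ∀ i, ∏ q ∈ n.primeFactors.erase p', jacobiSym (a q i) q = 1) :
    HasWZSSub (LSet n p') S := by
  have hn0 : n ≠ 0 := hsf.ne_zero
  have : NeZero n := ⟨hn0⟩
  have hcrt : ∀ i, ∃ k : ℕ, ∀ q ∈ n.primeFactors, k ≡ a q i [MOD q] := by
    intro i
    let K := Nat.chineseRemainderOfFinset (fun q => a q i) (fun q => q) n.primeFactors
      (fun q hq => (Nat.prime_of_mem_primeFactors hq).ne_zero)
      (by
        intro q hq r hr hqr
        exact (Nat.coprime_primes (Nat.prime_of_mem_primeFactors hq)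
          (Nat.prime_of_mem_primeFactors hr)).2 hqr)
    exact ⟨K.1, K.2⟩
  choose k hk using hcrt
  refine ⟨I, hI, fun i => (k i : ZMod n), fun i _ => ?_, ?_⟩
  · have hval : ∀ q ∈ n.primeFactors, ((k i : ZMod n)).val ≡ a q i [MOD q] := by
      intro q hq
      refine Nat.ModEq.trans ?_ (hk i q hq)
      rw [ZMod.val_natCast]
      exact (Nat.mod_modEq (k i) n).of_dvd (Nat.dvd_of_mem_primeFactors hq)
    refine ⟨?_, ?_⟩
    · rw [ZMod.isUnit_iff_coprime]
      refine Nat.Coprime.symm (Nat.coprime_of_dvd fun q hq hqn hqk => ?_)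
      have hqm : q ∈ n.primeFactors := by simp [hq, hqn, hn0]
      exact jac_ne_dvd q hq _ (ha q hqm i) (((hk i q hqm).dvd_iff dvd_rfl).1 hqk)
    · have e := jac_prod (((k i : ZMod n)).val : ℤ) n.primeFactors
        (fun q hq => Nat.prime_of_mem_primeFactors hq)
      rw [Nat.prod_primeFactors_of_squarefree hsf, ← Finset.mul_prod_erase _ _ hp'] at e
      rw [e, Finset.prod_congr rfl (fun q hq =>
        jac_modEq q _ _ (hval q (Finset.mem_of_mem_erase hq))), hprod i, mul_one]
  · have hd : n ∣ ∑ i ∈ I, k i * (S i).val := by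
      apply sqfree_dvd n hsf
      intro q hq
      have hmod : ∑ i ∈ I, k i * (S i).val ≡ ∑ i ∈ I, a q i * (S i).val [MOD q] := by
        rw [← ZMod.natCast_eq_natCast_iff]
        push_cast
        apply Finset.sum_congr rfl
        intro i _
        rw [(ZMod.natCast_eq_natCast_iff _ _ _).2 (hk i q hq)]
      exact (hmod.dvd_iff dvd_rfl).2 (hsum q hq)
    have := (ZMod.natCast_eq_zero_iff _ _).2 hd
    push_cast at this
    simpa using this

lemma prod_sign {ι : Type*} (P : Finset ι) (f : ι → ℤ) (h : ∀ q ∈ P, f q = 1 ∨ f q = -1) :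
    ∏ q ∈ P, f q = 1 ∨ ∏ q ∈ P, f q = -1 := by
  refine Finset.prod_induction f (fun z => z = 1 ∨ z = -1) ?_ (Or.inl rfl) h
  rintro a b (rfl | rfl) (rfl | rfl) <;> simp

lemma goodB1 (n p' : ℕ) (hsf : Squarefree n) (hp7 : ∀ q ∈ n.primeFactors, 7 ≤ q)
    (hp' : p' ∈ n.primeFactors) {l : ℕ}
    (S : Fin l → ZMod n) (I : Finset (Fin l)) (hI : I.Nonempty)
    (h1 : ∀ q ∈ n.primeFactors, (I.filter (fun i => ¬ q ∣ (S i).val)).card ≠ 1)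
    (q0 : ℕ) (hq0 : q0 ∈ n.primeFactors) (hq0p : q0 ≠ p')
    (h2 : (I.filter (fun i => ¬ q0 ∣ (S i).val)).card ≠ 2) :
    HasWZSSub (LSet n p') S := by
  have hloc : ∀ q, ∃ a : Fin l → ℕ, q ∈ n.primeFactors →
      (∀ i, jacobiSym (a i) q = 1 ∨ jacobiSym (a i) q = -1) ∧
      q ∣ ∑ i ∈ I, a i * (S i).val := by
    intro q
    by_cases hq : q ∈ n.primeFactors
    · obtain ⟨a, ha⟩ := nloc q (Nat.prime_of_mem_primeFactors hq) (hp7 q hq) I _ (h1 q hq)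
      exact ⟨a, fun _ => ha⟩
    · exact ⟨fun _ => 0, fun h => absurd h hq⟩
  choose a0 ha0 using hloc
  have hs := fun i => prod_sign ((n.primeFactors.erase p').erase q0)
    (fun q => jacobiSym (a0 q i) q)
    (fun q hq => (ha0 q (Finset.mem_of_mem_erase (Finset.mem_of_mem_erase hq))).1 i)
  obtain ⟨b, hb, hbs⟩ := nloc3 q0 (Nat.prime_of_mem_primeFactors hq0) (hp7 q0 hq0) I _
    (h1 q0 hq0) h2 _ hs
  refine glue n p' hsf hp' S I hI (Function.update a0 q0 b) ?_ ?_ ?_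
  · intro q hq i
    by_cases h : q = q0
    · subst h
      simp only [Function.update_self, hb]
      exact hs i
    · simp only [Function.update_of_ne h]
      exact (ha0 q hq).1 i
  · intro q hq
    by_cases h : q = q0
    · subst h
      simpa only [Function.update_self] using hbs
    · simpa only [Function.update_of_ne h] using (ha0 q hq).2
  · intro i
    rw [← Finset.mul_prod_erase _ _ (Finset.mem_erase.2 ⟨hq0p, hq0⟩)]
    have : ∏ x ∈ (n.primeFactors.erase p').erase q0,
        jacobiSym (Function.update a0 q0 b x i) x =
        ∏ q ∈ (n.primeFactors.erase p').erase q0, jacobiSym (a0 q i) q := by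
      apply Finset.prod_congr rfl
      intro q hq
      rw [Function.update_of_ne (Finset.ne_of_mem_erase hq)]
    rw [this, Function.update_self, hb]
    rcases hs i with h | h <;> rw [h] <;> norm_num

lemma goodB2 (n p' : ℕ) (hsf : Squarefree n) (hp7 : ∀ q ∈ n.primeFactors, 7 ≤ q)
    (hp' : p' ∈ n.primeFactors) {l : ℕ}
    (S : Fin l → ZMod n) (I : Finset (Fin l)) (hI : I.Nonempty)
    (h1 : ∀ q ∈ n.primeFactors, (I.filter (fun i => ¬ q ∣ (S i).val)).card ≠ 1)
    (q1 : ℕ) (hq1 : q1 ∈ n.primeFactors) (hq1p : q1 ≠ p')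
    (q2 : ℕ) (hq2 : q2 ∈ n.primeFactors) (hq2p : q2 ≠ p')
    (j : Fin l) (hj : j ∈ I) (hj1 : ¬ q1 ∣ (S j).val) (hj2 : q2 ∣ (S j).val) :
    HasWZSSub (LSet n p') S := by
  have h12 : q2 ≠ q1 := by rintro rfl; exact hj1 hj2
  have hloc : ∀ q, ∃ a : Fin l → ℕ, q ∈ n.primeFactors →
      (∀ i, jacobiSym (a i) q = 1 ∨ jacobiSym (a i) q = -1) ∧
      q ∣ ∑ i ∈ I, a i * (S i).val := by
    intro q
    by_cases hq : q ∈ n.primeFactors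
    · obtain ⟨a, ha⟩ := nloc q (Nat.prime_of_mem_primeFactors hq) (hp7 q hq) I _ (h1 q hq)
      exact ⟨a, fun _ => ha⟩
    · exact ⟨fun _ => 0, fun h => absurd h hq⟩
  choose a0 ha0 using hloc
  have hs := fun i => prod_sign ((n.primeFactors.erase p').erase q1)
    (fun q => jacobiSym (a0 q i) q)
    (fun q hq => (ha0 q (Finset.mem_of_mem_erase (Finset.mem_of_mem_erase hq))).1 i)
  obtain ⟨b, hb1, hb, hbs⟩ := nloc2 q1 (Nat.prime_of_mem_primeFactors hq1) (hp7 q1 hq1) I _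
    (h1 q1 hq1) j hj hj1 _ hs
  have hR := prod_sign (((n.primeFactors.erase p').erase q1).erase q2)
    (fun q => jacobiSym (a0 q j) q)
    (fun q hq => (ha0 q (Finset.mem_of_mem_erase
      (Finset.mem_of_mem_erase (Finset.mem_of_mem_erase hq)))).1 j)
  set R := ∏ q ∈ ((n.primeFactors.erase p').erase q1).erase q2, jacobiSym (a0 q j) q with hRdef
  obtain ⟨c', hc', -⟩ := nloc3 q2 (Nat.prime_of_mem_primeFactors hq2) (hp7 q2 hq2)
    (∅ : Finset (Fin l)) (fun _ => 0) (by simp) (by simp)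
    (fun _ => jacobiSym (b j) q1 * R)
    (by intro _; rcases hb1 j with h | h <;> rcases hR with h' | h' <;> simp [h, h'])
  obtain ⟨c, hc⟩ : ∃ c : ℕ, jacobiSym (c : ℤ) q2 = jacobiSym (b j) q1 * R := ⟨c' j, hc' j⟩
  have hm1 : q1 ∈ n.primeFactors.erase p' := Finset.mem_erase.2 ⟨hq1p, hq1⟩
  have hm2 : q2 ∈ (n.primeFactors.erase p').erase q1 :=
    Finset.mem_erase.2 ⟨h12, Finset.mem_erase.2 ⟨hq2p, hq2⟩⟩
  let a : ℕ → Fin l → ℕ := fun q => if q = q1 then b else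
    if q = q2 then Function.update (a0 q2) j c else a0 q
  have ea1 : a q1 = b := by simp [a]
  have ea2 : a q2 = Function.update (a0 q2) j c := by simp [a, h12]
  have ea3 : ∀ q, q ≠ q1 → q ≠ q2 → a q = a0 q := by
    intro q h h'; simp [a, h, h']
  refine glue n p' hsf hp' S I hI a ?_ ?_ ?_
  · intro q hq i
    by_cases h : q = q1
    · rw [h, ea1]; exact hb1 i
    by_cases h' : q = q2
    · rw [h', ea2]
      by_cases hij : i = j
      · rw [hij, Function.update_self, hc]
        rcases hb1 j with h | h <;> rcases hR with h' | h' <;> simp [h, h']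
      · rw [Function.update_of_ne hij]; exact (ha0 q2 hq2).1 i
    · rw [ea3 q h h']; exact (ha0 q hq).1 i
  · intro q hq
    by_cases h : q = q1
    · rw [h, ea1]; exact hbs
    by_cases h' : q = q2
    · rw [h', ea2]
      have h0 := (ha0 q2 hq2).2
      rw [← Finset.add_sum_erase _ _ hj] at h0 ⊢
      have hd := (Nat.dvd_add_right (Dvd.dvd.mul_left hj2 _)).1 h0
      refine dvd_add (Dvd.dvd.mul_left hj2 _) ?_
      have he : ∑ x ∈ I.erase j, Function.update (a0 q2) j c x * (S x).val =
          ∑ x ∈ I.erase j, a0 q2 x * (S x).val := by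
        apply Finset.sum_congr rfl
        intro i hi
        rw [Function.update_of_ne (Finset.ne_of_mem_erase hi)]
      rw [he]
      exact hd
    · rw [ea3 q h h']; exact (ha0 q hq).2
  · intro i
    rw [← Finset.mul_prod_erase _ _ hm1]
    by_cases hij : i = j
    · subst hij
      rw [← Finset.mul_prod_erase _ _ hm2]
      have : ∏ x ∈ ((n.primeFactors.erase p').erase q1).erase q2, jacobiSym (a x i) x = R := by
        apply Finset.prod_congr rfl
        intro q hq
        simp only [Finset.mem_erase] at hq
        rw [ea3 q hq.2.1 hq.1]
      rw [this, ea1, ea2, Function.update_self, hc]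
      rcases hb1 i with h | h <;> rcases hR with h' | h' <;> simp [h, h']
    · have : ∏ x ∈ (n.primeFactors.erase p').erase q1, jacobiSym (a x i) x =
          ∏ q ∈ (n.primeFactors.erase p').erase q1, jacobiSym (a0 q i) q := by
        apply Finset.prod_congr rfl
        intro q hq
        by_cases h' : q = q2
        · rw [h', ea2, Function.update_of_ne hij]
        · rw [ea3 q (Finset.ne_of_mem_erase hq) h']
      rw [this, ea1, hb i hij]
      rcases hs i with h | h <;> rw [h] <;> norm_num

lemma count_of_U (n : ℕ) (hn0 : n ≠ 0) {l : ℕ} (S : Fin l → ZMod n) (I : Finset (Fin l))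
    (a : Fin l → ZMod n) (ha : ∀ i ∈ I, IsUnit (a i)) (hsum : ∑ i ∈ I, a i * S i = 0)
    (q : ℕ) (hq : q ∈ n.primeFactors) :
    (I.filter (fun i => ¬ q ∣ (S i).val)).card ≠ 1 := by
  intro hc
  have : NeZero n := ⟨hn0⟩
  have hqp : Fact q.Prime := ⟨Nat.prime_of_mem_primeFactors hq⟩
  have hqn := Nat.dvd_of_mem_primeFactors hq
  let φ := ZMod.castHom hqn (ZMod q)
  have hφ : ∀ x : ZMod n, φ x = 0 ↔ q ∣ x.val := by
    intro x
    conv_lhs => rw [← ZMod.natCast_zmod_val x, map_natCast]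
    exact ZMod.natCast_eq_zero_iff _ _
  obtain ⟨j, hj⟩ := Finset.card_eq_one.1 hc
  have hjm : j ∈ I.filter (fun i => ¬ q ∣ (S i).val) := by rw [hj]; simp
  rw [Finset.mem_filter] at hjm
  have h := congrArg φ hsum
  rw [map_sum, map_zero, Finset.sum_eq_single_of_mem j hjm.1] at h
  · rw [map_mul] at h
    rcases mul_eq_zero.1 h with h | h
    · exact ((ha j hjm.1).map φ).ne_zero h
    · exact hjm.2 ((hφ _).1 h)
  · intro i hi hij
    rw [map_mul]
    have : q ∣ (S i).val := by
      by_contra hn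
      have : i ∈ I.filter (fun i => ¬ q ∣ (S i).val) := by simp [hi, hn]
      rw [hj] at this
      exact hij (by simpa using this)
    rw [(hφ _).2 this, mul_zero]

lemma U_to_L (n p' : ℕ) (hsf : Squarefree n) (hp7 : ∀ q ∈ n.primeFactors, 7 ≤ q)
    (hp' : p' ∈ n.primeFactors) (r : ℕ) (hr : r ∈ n.primeFactors) (hrp : r ≠ p')
    {l : ℕ} (hl : 4 ≤ l) (S : Fin l → ZMod n) (hU : HasWZSSub (USet n) S) :
    HasWZSSub (LSet n p') S := by
  by_contra hL
  obtain ⟨I, hI, a, ha, hsum⟩ := hU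
  have hc := count_of_U n hsf.ne_zero S I a ha hsum
  have B1 : ∀ I : Finset (Fin l), I.Nonempty →
      (∀ q ∈ n.primeFactors, (I.filter (fun i => ¬ q ∣ (S i).val)).card ≠ 1) →
      ∀ q ∈ n.primeFactors, q ≠ p' → (I.filter (fun i => ¬ q ∣ (S i).val)).card = 2 := by
    intro I hI h q hq hqp
    by_contra h2
    exact hL (goodB1 n p' hsf hp7 hp' S I hI h q hq hqp h2)
  let Z : Fin l → Prop := fun w => ∀ q ∈ n.primeFactors, q ≠ p' → q ∣ (S w).val
  have H1 : ∀ w, Z w → ¬ p' ∣ (S w).val := by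
    intro w hw hwp
    have hall : ∀ q ∈ n.primeFactors, q ∣ (S w).val := by
      intro q hq
      by_cases h : q = p'
      · rw [h]; exact hwp
      · exact hw q hq h
    have := B1 {w} (by simp) (by
      intro q hq; simp [Finset.filter_singleton, hall q hq]) r hr hrp
    simp [Finset.filter_singleton, hall r hr] at this
  have H2 : ∀ w v, w ≠ v → Z w → Z v → False := by
    intro w v hwv hw hv
    have := B1 {w, v} (by simp) (by
      intro q hq
      by_cases h : q = p'
      · rw [h]; simp [Finset.filter_insert, Finset.filter_singleton, H1 w hw, H1 v hv, hwv]
      · simp [Finset.filter_insert, Finset.filter_singleton, hw q hq h, hv q hq h]) r hr hrp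
    simp [Finset.filter_insert, Finset.filter_singleton, hw r hr hrp, hv r hr hrp] at this
  obtain ⟨i, j, hij, hJ⟩ := Finset.card_eq_two.1 (B1 I hI hc r hr hrp)
  have hJq : ∀ t ∈ I, ∀ q ∈ n.primeFactors, q ≠ p' → (¬ q ∣ (S t).val ↔ (t = i ∨ t = j)) := by
    intro t ht q hq hqp
    have e1 : t ∈ I.filter (fun i => ¬ r ∣ (S i).val) ↔ (t = i ∨ t = j) := by rw [hJ]; simp
    rw [Finset.mem_filter] at e1
    simp only [ht, true_and] at e1
    rw [← e1]
    constructor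
    · intro h1 h2
      exact hL (goodB2 n p' hsf hp7 hp' S I hI hc q hq hqp r hr hrp t ht h1 h2)
    · intro h1 h2
      exact hL (goodB2 n p' hsf hp7 hp' S I hI hc r hr hrp q hq hqp t ht h1 h2)
  have hiI : i ∈ I := by
    have : i ∈ I.filter (fun i => ¬ r ∣ (S i).val) := by rw [hJ]; simp
    exact (Finset.mem_filter.1 this).1
  have hjI : j ∈ I := by
    have : j ∈ I.filter (fun i => ¬ r ∣ (S i).val) := by rw [hJ]; simp
    exact (Finset.mem_filter.1 this).1
  have hiu : ∀ q ∈ n.primeFactors, q ≠ p' → ¬ q ∣ (S i).val :=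
    fun q hq h => (hJq i hiI q hq h).2 (Or.inl rfl)
  have hju : ∀ q ∈ n.primeFactors, q ≠ p' → ¬ q ∣ (S j).val :=
    fun q hq h => (hJq j hjI q hq h).2 (Or.inr rfl)
  have cnt3 : ∀ q w, w ≠ i → w ≠ j →
      (({i, j, w} : Finset (Fin l)).filter (fun i => ¬ q ∣ (S i).val)).card =
      (if q ∣ (S i).val then 0 else 1) + (if q ∣ (S j).val then 0 else 1) +
      (if q ∣ (S w).val then 0 else 1) := by
    intro q w hwi hwj
    rw [Finset.card_filter, Finset.sum_insert (by simp [hij, hwi.symm]),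
      Finset.sum_insert (by simp [hwj.symm]), Finset.sum_singleton]
    simp only [ite_not]
    ring
  have cnt4 : ∀ q w v, w ≠ i → w ≠ j → v ≠ i → v ≠ j → w ≠ v →
      (({i, j, w, v} : Finset (Fin l)).filter (fun i => ¬ q ∣ (S i).val)).card =
      (if q ∣ (S i).val then 0 else 1) + (if q ∣ (S j).val then 0 else 1) +
      (if q ∣ (S w).val then 0 else 1) + (if q ∣ (S v).val then 0 else 1) := by
    intro q w v hwi hwj hvi hvj hwv
    rw [Finset.card_filter, Finset.sum_insert (by simp [hij, hwi.symm, hvi.symm]),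
      Finset.sum_insert (by simp [hwj.symm, hvj.symm]), Finset.sum_insert (by simp [hwv]),
      Finset.sum_singleton]
    simp only [ite_not]
    ring
  have H3 : ∀ w, w ≠ i → w ≠ j → ¬ Z w →
      (if p' ∣ (S i).val then 0 else 1) + (if p' ∣ (S j).val then 0 else 1) +
      (if p' ∣ (S w).val then 0 else 1) = 1 := by
    intro w hwi hwj hw
    by_contra hne
    simp only [Z, not_forall] at hw
    obtain ⟨q, hq, hqp, hqw⟩ := hw
    have := B1 {i, j, w} (by simp) (by
      intro t ht
      rw [cnt3 t w hwi hwj]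
      by_cases h : t = p'
      · rw [h]; exact hne
      · simp only [hiu t ht h, hju t ht h, if_false]; omega) q hq hqp
    rw [cnt3 q w hwi hwj] at this
    simp [hiu q hq hqp, hju q hq hqp, hqw] at this
  have H4 : ∀ w v, w ≠ i → w ≠ j → v ≠ i → v ≠ j → w ≠ v → ¬ Z w →
      (if p' ∣ (S i).val then 0 else 1) + (if p' ∣ (S j).val then 0 else 1) +
      (if p' ∣ (S w).val then 0 else 1) + (if p' ∣ (S v).val then 0 else 1) = 1 := by
    intro w v hwi hwj hvi hvj hwv hw
    by_contra hne
    simp only [Z, not_forall] at hw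
    obtain ⟨q, hq, hqp, hqw⟩ := hw
    have := B1 {i, j, w, v} (by simp) (by
      intro t ht
      rw [cnt4 t w v hwi hwj hvi hvj hwv]
      by_cases h : t = p'
      · rw [h]; exact hne
      · simp only [hiu t ht h, hju t ht h, if_false]; omega) q hq hqp
    rw [cnt4 q w v hwi hwj hvi hvj hwv] at this
    simp [hiu q hq hqp, hju q hq hqp, hqw] at this
    omega
  obtain ⟨w, hw, v, hv, hwv⟩ : ∃ w ∈ (univ : Finset (Fin l)) \ {i, j},
      ∃ v ∈ (univ : Finset (Fin l)) \ {i, j}, w ≠ v := by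
    apply Finset.one_lt_card.1
    have h1 := Finset.le_card_sdiff ({i, j} : Finset (Fin l)) univ
    have h2 := Finset.card_le_two (a := i) (b := j)
    simp only [Finset.card_univ, Fintype.card_fin] at h1
    omega
  simp only [mem_sdiff, mem_univ, true_and, mem_insert, mem_singleton, not_or] at hw hv
  have key : ∀ w v, w ≠ i → w ≠ j → v ≠ i → v ≠ j → w ≠ v → ¬ Z w → False := by
    intro w v hwi hwj hvi hvj hwv hZw
    have h3 := H3 w hwi hwj hZw
    have h4 := H4 w v hwi hwj hvi hvj hwv hZw
    have hvp : p' ∣ (S v).val := by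
      by_contra h
      simp only [h, if_false] at h4
      omega
    have hZv : ¬ Z v := fun h => H1 v h hvp
    have h3' := H3 v hvi hvj hZv
    simp only [hvp, if_true] at h3'
    have hk : ∃ k ∈ I, k ≠ i ∧ k ≠ j ∧ ¬ p' ∣ (S k).val := by
      by_contra hno
      push Not at hno
      apply hc p' hp'
      have hsub : ({i, j} : Finset (Fin l)) ⊆ I := by
        intro t ht
        simp only [mem_insert, mem_singleton] at ht
        rcases ht with rfl | rfl <;> assumption
      have e : I.filter (fun i => ¬ p' ∣ (S i).val) =
          ({i, j} : Finset (Fin l)).filter (fun i => ¬ p' ∣ (S i).val) := by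
        ext t
        simp only [mem_filter, mem_insert, mem_singleton]
        constructor
        · rintro ⟨ht, htp⟩
          refine ⟨?_, htp⟩
          by_contra hn
          rw [not_or] at hn
          exact htp (hno t ht hn.1 hn.2)
        · rintro ⟨ht, htp⟩
          exact ⟨hsub (by simpa using ht), htp⟩
      rw [e, Finset.card_filter, Finset.sum_insert (by simp [hij]), Finset.sum_singleton]
      simp only [ite_not]
      omega
    obtain ⟨k, hkI, hki, hkj, hkp⟩ := hk
    have hkv : v ≠ k := by rintro rfl; exact hkp hvp
    have h4' := H4 v k hvi hvj hki hkj hkv hZv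
    simp only [hkp, if_false] at h4'
    omega
  by_cases hZw : Z w
  · by_cases hZv : Z v
    · exact H2 w v hwv hZw hZv
    · exact key v w hv.1 hv.2 hw.1 hw.2 hwv.symm hZv
  · exact key w v hw.1 hw.2 hv.1 hv.2 hwv hZw

lemma L_to_U (n p' : ℕ) {l : ℕ} (S : Fin l → ZMod n) (h : HasWZSSub (LSet n p') S) :
    HasWZSSub (USet n) S := by
  obtain ⟨I, hI, a, ha, hs⟩ := h
  exact ⟨I, hI, a, fun i hi => (ha i hi).1, hs⟩

lemma U_free (n : ℕ) (hsf : Squarefree n) (k : ℕ) (hk : k ≤ n.primeFactors.card) :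
    ∃ S : Fin k → ZMod n, ¬ HasWZSSub (USet n) S := by
  have hn0 := hsf.ne_zero
  have : NeZero n := ⟨hn0⟩
  let e := n.primeFactors.equivFin.symm
  let p : Fin k → ℕ := fun i => (e (Fin.castLE hk i)).1
  have hp : ∀ i, p i ∈ n.primeFactors := fun i => (e (Fin.castLE hk i)).2
  have hinj : Function.Injective p :=
    Subtype.val_injective.comp (e.injective.comp (Fin.castLE_injective hk))
  refine ⟨fun i => ((n / p i : ℕ) : ZMod n), ?_⟩
  rintro ⟨I, ⟨j, hj⟩, a, ha, hsum⟩
  refine count_of_U n hn0 _ I a ha hsum (p j) (hp j) ?_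
  have hpp := fun i => Nat.prime_of_mem_primeFactors (hp i)
  have hdn := fun i => Nat.dvd_of_mem_primeFactors (hp i)
  have hval : ∀ i, ((n / p i : ℕ) : ZMod n).val = n / p i := fun i =>
    ZMod.val_cast_of_lt (Nat.div_lt_self (Nat.pos_of_ne_zero hn0) (hpp i).one_lt)
  rw [Finset.card_eq_one]
  refine ⟨j, ?_⟩
  ext i
  simp only [mem_filter, mem_singleton, hval]
  constructor
  · rintro ⟨_, h⟩
    by_contra hne
    apply h
    have hpne : p j ≠ p i := fun h => hne (hinj h).symm
    have h1 : p j ∣ p i * (n / p i) := by rw [Nat.mul_div_cancel' (hdn i)]; exact hdn j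
    exact ((hpp j).dvd_mul.1 h1).resolve_left
      (fun h => hpne ((Nat.prime_dvd_prime_iff_eq (hpp j) (hpp i)).1 h))
  · rintro rfl
    refine ⟨hj, fun h => ?_⟩
    have h2 : p i * p i ∣ n := by
      conv_rhs => rw [← Nat.mul_div_cancel' (hdn i)]
      exact Nat.mul_dvd_mul_left _ h
    exact (hpp i).one_lt.ne' (Nat.isUnit_iff.1 (hsf _ h2))

end global_lemmas

theorem extremal_L_iff_U (n p' : ℕ) (hodd : Odd n) (hsf : Squarefree n)
    (hp7 : ∀ p : ℕ, p.Prime → p ∣ n → 7 ≤ p)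
    (hOmega2 : (Nat.primeFactorsList n).length ≠ 2)
    (hOmega3 : (Nat.primeFactorsList n).length ≠ 3)
    (hp' : p'.Prime) (hp'n : p' ∣ n)
    {l : ℕ} (S : Fin l → ZMod n) :
    IsExtremal n (LSet n p') S ↔ IsExtremal n (USet n) S := by
  classical
  have hn0 := hsf.ne_zero
  have hp'm : p' ∈ n.primeFactors := by simp [hp', hp'n, hn0]
  have h7 : ∀ q ∈ n.primeFactors, 7 ≤ q := fun q hq =>
    hp7 q (Nat.prime_of_mem_primeFactors hq) (Nat.dvd_of_mem_primeFactors hq)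
  have hcard : n.primeFactors.card = (Nat.primeFactorsList n).length := by
    rw [Nat.primeFactors, List.toFinset_card_of_nodup]
    exact (Nat.squarefree_iff_nodup_primeFactorsList hn0).1 hsf
  have hpos : 0 < n.primeFactors.card := Finset.card_pos.2 ⟨p', hp'm⟩
  by_cases hone : n.primeFactors.card = 1
  · obtain ⟨q, hq⟩ := Finset.card_eq_one.1 hone
    have hqp : p' = q := by rw [hq] at hp'm; simpa using hp'm
    have hn : n = p' := by
      rw [← Nat.prod_primeFactors_of_squarefree hsf, hq, hqp]; simp
    have hLU : LSet n p' = USet n := by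
      ext a
      simp [LSet, USet, ← hn]
    rw [hLU]
  have h4 : 4 ≤ n.primeFactors.card := by omega
  obtain ⟨r, hr, hrp⟩ := Finset.exists_mem_ne (show 1 < n.primeFactors.card by omega) p'
  have key : ∀ k, 4 ≤ k → ∀ T : Fin k → ZMod n,
      (HasWZSSub (LSet n p') T ↔ HasWZSSub (USet n) T) := fun k hk T =>
    ⟨L_to_U n p' T, U_to_L n p' hsf h7 hp'm r hr hrp hk T⟩
  have hset : {k | 0 < k ∧ ∀ T : Fin k → ZMod n, HasWZSSub (LSet n p') T} =
      {k | 0 < k ∧ ∀ T : Fin k → ZMod n, HasWZSSub (USet n) T} := by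
    ext k
    simp only [Set.mem_ofPred_eq]
    constructor
    · rintro ⟨hk, h⟩
      exact ⟨hk, fun T => L_to_U n p' T (h T)⟩
    · rintro ⟨hk, h⟩
      refine ⟨hk, fun T => (key k ?_ T).2 (h T)⟩
      by_contra hlt
      obtain ⟨T, hT⟩ := U_free n hsf k (by omega)
      exact hT (h T)
  have hD : DavW n (LSet n p') = DavW n (USet n) := by
    unfold DavW
    rw [hset]
  unfold IsExtremal
  rw [hD]
  refine and_congr_right fun hl => ?_
  by_cases hl0 : l = 0
  · subst hl0
    constructor <;> rintro - ⟨I, ⟨i, -⟩, -⟩ <;> exact i.elim0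
  have hmem : DavW n (USet n) ∈ {k | 0 < k ∧ ∀ T : Fin k → ZMod n, HasWZSSub (USet n) T} := by
    apply Nat.sInf_mem
    by_contra hne
    rw [Set.not_nonempty_iff_eq_empty] at hne
    have : DavW n (USet n) = 0 := by unfold DavW; rw [hne]; simp
    omega
  have h5 : 5 ≤ DavW n (USet n) := by
    by_contra hlt
    obtain ⟨T, hT⟩ := U_free n hsf (DavW n (USet n)) (by omega)
    exact hT (hmem.2 T)
  rw [key l (by omega) S]
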